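/- Let V be a real inner product space of dimension 2 and let u, v, w be three nonzero vectors of V. Then either the three non-oriented angles satisfy angle(u,v) + angle(v,w) + angle(w,u) = 2π, or one of the three angles equals the sum of the other two (i.e., angle(u,w) = angle(u,v) + angle(v,w), or angle(u,v) = angle(u,w) + angle(w,v), or angle(v,w) = angle(v,u) + angle(u,w)). -/

import Mathlib

open InnerProductGeometry Real

/-!
Among three nonzero vectors of a plane, one of them, say `x`, is a combination `s • y + t • z` of
the other two. Comparing the signs of `s` and `t` places one of the three vectors, or the opposite
of one of them, in the convex cone spanned by the other two. Angles are additive along such a cone: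
in the first case one angle is the sum of the other two, and in the second case, where
`angle y (-x) = π - angle y x`, the three angles sum to `2π`.
-/

section Cone

variable {K E : Type*} [Field K] [LinearOrder K] [IsStrictOrderedRing K]
  [AddCommGroup E] [Module K E] {x y z : E}

theorem mem_hull_pair_of_smul_eq_add {a b c : K} (ha : 0 ≤ a) (hb : 0 ≤ b) (hc : 0 < c)
    (h : c • x = a • y + b • z) : x ∈ PointedCone.hull K {y, z} := by
  rw [← PointedCone.smul_mem_iff _ hc, h]
  exact add_mem (PointedCone.smul_mem _ ha (PointedCone.subset_hull (by simp)))
    (PointedCone.smul_mem _ hb (PointedCone.subset_hull (by simp)))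

theorem neg_mem_hull_pair_or_mem_hull_pair_of_mem_span_pair (h : x ∈ Submodule.span K {y, z}) :
    -x ∈ PointedCone.hull K {y, z} ∨ x ∈ PointedCone.hull K {y, z} ∨
      y ∈ PointedCone.hull K {x, z} ∨ z ∈ PointedCone.hull K {x, y} := by
  obtain ⟨s, t, rfl⟩ := Submodule.mem_span_pair.mp h
  rcases le_or_gt s 0 with hs | hs <;> rcases le_or_gt t 0 with ht | ht
  · left
    exact mem_hull_pair_of_smul_eq_add (neg_nonneg.mpr hs) (neg_nonneg.mpr ht) one_pos (by module)
  · right; right; right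
    exact mem_hull_pair_of_smul_eq_add zero_le_one (neg_nonneg.mpr hs) ht (by module)
  · right; right; left
    exact mem_hull_pair_of_smul_eq_add zero_le_one (neg_nonneg.mpr ht) hs (by module)
  · right; left
    exact mem_hull_pair_of_smul_eq_add hs.le ht.le one_pos (by module)

end Cone

section LinearDependence

variable {K E : Type*} [DivisionRing K] [AddCommGroup E] [Module K E] {x y z : E}

theorem mem_span_pair_of_not_linearIndependent_triple (h : ¬LinearIndependent K ![x, y, z]) :
    x ∈ Submodule.span K {y, z} ∨ y ∈ Submodule.span K {x, z} ∨
      z ∈ Submodule.span K {x, y} := by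
  have image_compl (i j k : Fin 3) (hi : Set.univ \ {i} = {j, k}) :
      ![x, y, z] '' (Set.univ \ {i}) = {![x, y, z] j, ![x, y, z] k} := by
    rw [hi, Set.image_pair]
  simpa [linearIndependent_iff_notMem_span, Fin.exists_fin_succ,
    image_compl 0 1 2 (by ext i; fin_cases i <;> simp),
    image_compl 1 0 2 (by ext i; fin_cases i <;> simp),
    image_compl 2 0 1 (by ext i; fin_cases i <;> simp)] using h

end LinearDependence

section Angle

variable {V : Type*} [NormedAddCommGroup V] [InnerProductSpace ℝ V] {x y z : V}

theorem angle_add_angle_add_angle_eq_two_pi_of_neg_mem_hull (hx : x ≠ 0)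
    (h : -x ∈ PointedCone.hull ℝ {y, z}) : angle x y + angle y z + angle z x = 2 * π := by
  -- The library lemma is stated for spans over `ℝ≥0`, to which `PointedCone.hull ℝ` is defeq.
  have hyz : angle y z = (π - angle y x) + (π - angle x z) := by
    simpa only [angle_neg_left, angle_neg_right] using
      angle_eq_angle_add_add_angle_add_of_mem_span (neg_ne_zero.mpr hx) h
  rw [hyz, angle_comm y x, angle_comm z x]
  ring

theorem angle_sum_eq_two_pi_or_angle_eq_add_of_mem_span (hx : x ≠ 0) (hy : y ≠ 0) (hz : z ≠ 0)
    (h : x ∈ Submodule.span ℝ {y, z}) :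
    angle x y + angle y z + angle z x = 2 * π
    ∨ angle x z = angle x y + angle y z
    ∨ angle x y = angle x z + angle z y
    ∨ angle y z = angle y x + angle x z := by
  rcases neg_mem_hull_pair_or_mem_hull_pair_of_mem_span_pair h with hneg | hx' | hy' | hz'
  · exact .inl (angle_add_angle_add_angle_eq_two_pi_of_neg_mem_hull hx hneg)
  · exact .inr (.inr (.inr (angle_eq_angle_add_add_angle_add_of_mem_span hx hx')))
  · exact .inr (.inl (angle_eq_angle_add_add_angle_add_of_mem_span hy hy'))
  · exact .inr (.inr (.inl (angle_eq_angle_add_add_angle_add_of_mem_span hz hz')))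

theorem stmt_11_general {u v w : V} (hu : u ≠ 0) (hv : v ≠ 0) (hw : w ≠ 0)
    (h : ¬LinearIndependent ℝ ![u, v, w]) :
    angle u v + angle v w + angle w u = 2 * π
    ∨ angle u w = angle u v + angle v w
    ∨ angle u v = angle u w + angle w v
    ∨ angle v w = angle v u + angle u w := by
  rcases mem_span_pair_of_not_linearIndependent_triple h with hu' | hv' | hw'
  · exact angle_sum_eq_two_pi_or_angle_eq_add_of_mem_span hu hv hw hu'
  · have := angle_sum_eq_two_pi_or_angle_eq_add_of_mem_span hv hu hw hv'
    grind [angle_comm]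
  · have := angle_sum_eq_two_pi_or_angle_eq_add_of_mem_span hw hu hv hw'
    grind [angle_comm]

end Angle

/-- For three nonzero vectors `u, v, w` in a 2-dimensional real inner
product space, either the three non-oriented angles sum to `2π`, or one of them is the
sum of the other two. -/
theorem stmt_11 (V : Type*) [NormedAddCommGroup V] [InnerProductSpace ℝ V]
    (hdim : Module.finrank ℝ V = 2)
    (u v w : V) (hu : u ≠ 0) (hv : v ≠ 0) (hw : w ≠ 0) :
    angle u v + angle v w + angle w u = 2 * π
    ∨ angle u w = angle u v + angle v w
    ∨ angle u v = angle u w + angle w v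
    ∨ angle v w = angle v u + angle u w := by
  have : Module.Finite ℝ V := Module.finite_of_finrank_eq_succ hdim
  exact stmt_11_general hu hv hw fun h ↦ by simpa [hdim] using h.fintype_card_le_finrank
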